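/- Let (X,T) be a TDS with upper semi-continuous entropy map, h_top(T) < ∞, and Φ subadditive with β(Φ) > -∞. If μ is a weak-* accumulation point of equilibrium states (μ_t) as t → ∞, then h_μ(T) = lim_{t→∞} h_{μ_t}(T) = max{h_ν(T) : ν ∈ M_max(Φ)}. -/

import Mathlib

open MeasureTheory Filter Topology Set
open scoped ENNReal NNReal

/-- Positive part of an extended real, as an extended nonnegative real. -/
noncomputable def EReal.posPart (a : EReal) : ℝ≥0∞ :=
  if a = ⊤ then ⊤ else ENNReal.ofReal a.toReal

/-- `EReal`-valued logarithm of a real number: `elog r = -∞` for `r ≤ 0`. -/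
noncomputable def elog (r : ℝ) : EReal := ENNReal.log (ENNReal.ofReal r)

/-- The integral of an `EReal`-valued function, with values in `[-∞, ∞]`. -/
noncomputable def eint {X : Type*} [MeasurableSpace X] (μ : Measure X) (f : X → EReal) : EReal :=
  ((∫⁻ x, (f x).posPart ∂μ : ℝ≥0∞) : EReal) - ((∫⁻ x, (-f x).posPart ∂μ : ℝ≥0∞) : EReal)

/-- `Φ = {log φₙ}` is a subadditive potential for `T`: each `φₙ` is continuous,
nonnegative, and `φ_{n+m}(x) ≤ φₙ(x) · φₘ(Tⁿ x)`. -/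
def SubadditivePotential {X : Type*} [TopologicalSpace X] (T : X → X) (φ : ℕ → X → ℝ) : Prop :=
  (∀ n, 1 ≤ n → Continuous (φ n)) ∧ (∀ n x, 1 ≤ n → 0 ≤ φ n x) ∧
    (∀ m n : ℕ, 1 ≤ m → 1 ≤ n → ∀ x, φ (n + m) x ≤ φ n x * φ m (T^[n] x))

lemma eposPart_coe (r : ℝ) : EReal.posPart (r : EReal) = ENNReal.ofReal r := by
  simp [EReal.posPart]

lemma eposPart_mono {a b : EReal} (hab : a ≤ b) : EReal.posPart a ≤ EReal.posPart b := by
  induction b with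
  | top => simp [EReal.posPart]
  | bot => rw [le_bot_iff.1 hab]
  | coe b =>
    induction a with
    | top => simp at hab
    | bot => simp [EReal.posPart]
    | coe a =>
      rw [eposPart_coe, eposPart_coe]
      exact ENNReal.ofReal_le_ofReal (EReal.coe_le_coe_iff.1 hab)

lemma coe_ennreal_eq {a : ℝ≥0∞} (ha : a ≠ ⊤) : (a : EReal) = (a.toReal : EReal) := by
  rw [EReal.coe_ennreal_toReal ha]

lemma elog_of_pos {r : ℝ} (hr : 0 < r) : elog r = (Real.log r : EReal) :=
  ENNReal.log_ofReal_of_pos hr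

lemma elog_of_nonpos {r : ℝ} (hr : r ≤ 0) : elog r = ⊥ := by
  simp [elog, ENNReal.ofReal_of_nonpos hr]

lemma elog_le_log {r s : ℝ} (hs : 0 < s) (hrs : r ≤ s) : elog r ≤ (Real.log s : EReal) := by
  rw [← elog_of_pos hs]
  exact ENNReal.log_monotone (ENNReal.ofReal_le_ofReal hrs)

lemma eint_le_integral {X : Type*} [MeasurableSpace X] (μ : Measure X)
    (f : X → EReal) (g : X → ℝ) (hg : Integrable g μ) (hfg : ∀ x, f x ≤ (g x : EReal)) :
    eint μ f ≤ ((∫ x, g x ∂μ : ℝ) : EReal) := by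
  have h1 : ∫⁻ x, ENNReal.ofReal (g x) ∂μ ≠ ⊤ := hg.lintegral_lt_top.ne
  have h2 : ∫⁻ x, ENNReal.ofReal (-g x) ∂μ ≠ ⊤ := hg.neg.lintegral_lt_top.ne
  rw [integral_eq_lintegral_pos_part_sub_lintegral_neg_part hg, EReal.coe_sub,
    ← coe_ennreal_eq h1, ← coe_ennreal_eq h2]
  unfold eint
  refine EReal.sub_le_sub ?_ ?_
  · refine EReal.coe_ennreal_le_coe_ennreal_iff.2 (lintegral_mono fun x => ?_)
    rw [← eposPart_coe]
    exact eposPart_mono (hfg x)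
  · refine EReal.coe_ennreal_le_coe_ennreal_iff.2 (lintegral_mono fun x => ?_)
    rw [← eposPart_coe]
    refine eposPart_mono ?_
    rw [EReal.coe_neg]
    exact EReal.neg_le_neg_iff.2 (hfg x)

lemma continuous_logmax {X : Type*} [TopologicalSpace X] {φ : X → ℝ} (hφ : Continuous φ)
    {ε : ℝ} (hε : 0 < ε) : Continuous fun x => Real.log (max (φ x) ε) :=
  (hφ.max continuous_const).log fun _ => (lt_max_of_lt_right hε).ne'

lemma integrable_of_cont {X : Type*} [MetricSpace X] [CompactSpace X]
    [MeasurableSpace X] [BorelSpace X] (μ : Measure X) [IsFiniteMeasure μ] {f : X → ℝ}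
    (hf : Continuous f) : Integrable f μ := by
  exact (BoundedContinuousFunction.mkOfCompact ⟨f, hf⟩).integrable μ

lemma le_eint {X : Type*} [MetricSpace X] [CompactSpace X]
    [MeasurableSpace X] [BorelSpace X] (μ : Measure X) [IsProbabilityMeasure μ]
    {φ : X → ℝ} (hφ : Continuous φ) (c : ℝ)
    (hc : ∀ ε : ℝ, 0 < ε → c ≤ ∫ x, Real.log (max (φ x) ε) ∂μ) :
    (c : EReal) ≤ eint μ (fun x => elog (φ x)) := by
  set a : ℝ≥0∞ := ∫⁻ x, EReal.posPart (elog (φ x)) ∂μ with ha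
  have hpos : ∀ k : ℕ, ∫⁻ x, ENNReal.ofReal (Real.log (max (φ x) (1 / ((k : ℝ) + 1)))) ∂μ = a := by
    intro k
    refine lintegral_congr fun x => ?_
    have hk : (0 : ℝ) < 1 / ((k : ℝ) + 1) := by positivity
    have hk1 : 1 / ((k : ℝ) + 1) ≤ 1 := by
      rw [div_le_one (by positivity)]; linarith [Nat.cast_nonneg (α := ℝ) k]
    rcases le_or_gt (φ x) 0 with h0 | h0
    · rw [elog_of_nonpos h0, max_eq_right (h0.trans hk.le),
        ENNReal.ofReal_of_nonpos (Real.log_nonpos hk.le hk1)]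
      simp [EReal.posPart]
    · rw [elog_of_pos h0, eposPart_coe]
      rcases le_total (φ x) (1 / ((k : ℝ) + 1)) with h1 | h1
      · rw [max_eq_right h1, ENNReal.ofReal_of_nonpos (Real.log_nonpos hk.le hk1),
          ENNReal.ofReal_of_nonpos (Real.log_nonpos h0.le (h1.trans hk1))]
      · rw [max_eq_left h1]
  have hi : ∀ k : ℕ, Integrable (fun x => Real.log (max (φ x) (1 / ((k : ℝ) + 1)))) μ :=
    fun k => integrable_of_cont μ (continuous_logmax hφ (by positivity))
  have hafin : a ≠ ⊤ := by
    rw [← hpos 0]; exact (hi 0).lintegral_lt_top.ne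
  have hneg : ∀ k : ℕ, ∫⁻ x, ENNReal.ofReal (-Real.log (max (φ x) (1 / ((k : ℝ) + 1)))) ∂μ
      ≤ ENNReal.ofReal (a.toReal - c) := by
    intro k
    have h2 : ∫⁻ x, ENNReal.ofReal (-Real.log (max (φ x) (1 / ((k : ℝ) + 1)))) ∂μ ≠ ⊤ :=
      (hi k).neg.lintegral_lt_top.ne
    have h3 := hc (1 / ((k : ℝ) + 1)) (by positivity)
    rw [integral_eq_lintegral_pos_part_sub_lintegral_neg_part (hi k), hpos k] at h3
    rw [ENNReal.le_ofReal_iff_toReal_le h2]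
    · linarith
    · have : 0 ≤ (∫⁻ x, ENNReal.ofReal (-Real.log (max (φ x) (1 / ((k : ℝ) + 1)))) ∂μ).toReal :=
        ENNReal.toReal_nonneg
      linarith
  have hac : 0 ≤ a.toReal - c := by
    have h3 := hc (1 / (((0 : ℕ) : ℝ) + 1)) (by positivity)
    rw [integral_eq_lintegral_pos_part_sub_lintegral_neg_part (hi 0), hpos 0] at h3
    have : 0 ≤ (∫⁻ x, ENNReal.ofReal (-Real.log (max (φ x) (1 / (((0 : ℕ) : ℝ) + 1)))) ∂μ).toReal :=
        ENNReal.toReal_nonneg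
    linarith
  have hlim : ∀ x, Tendsto (fun k : ℕ =>
      ENNReal.ofReal (-Real.log (max (φ x) (1 / ((k : ℝ) + 1))))) atTop
      (𝓝 (EReal.posPart (-elog (φ x)))) := by
    intro x
    rcases le_or_gt (φ x) 0 with h0 | h0
    · rw [elog_of_nonpos h0]
      have e : EReal.posPart (-⊥) = ⊤ := by simp [EReal.posPart]
      rw [e]
      refine ENNReal.tendsto_ofReal_atTop.comp ?_
      have : (fun k : ℕ => -Real.log (max (φ x) (1 / ((k : ℝ) + 1)))) =
          fun k : ℕ => Real.log ((k : ℝ) + 1) := by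
        funext k
        rw [max_eq_right (h0.trans (by positivity)), one_div, Real.log_inv, neg_neg]
      rw [this]
      exact Real.tendsto_log_atTop.comp
        (tendsto_atTop_add_const_right _ _ tendsto_natCast_atTop_atTop)
    · rw [elog_of_pos h0, ← EReal.coe_neg, eposPart_coe]
      refine tendsto_const_nhds.congr' ?_
      have := (tendsto_one_div_add_atTop_nhds_zero_nat (𝕜 := ℝ)).eventually_lt_const h0
      filter_upwards [this] with k hk
      rw [max_eq_left hk.le]
  have hfat : ∫⁻ x, EReal.posPart (-elog (φ x)) ∂μ ≤ ENNReal.ofReal (a.toReal - c) := by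
    calc ∫⁻ x, EReal.posPart (-elog (φ x)) ∂μ
        = ∫⁻ x, liminf (fun k : ℕ =>
            ENNReal.ofReal (-Real.log (max (φ x) (1 / ((k : ℝ) + 1))))) atTop ∂μ :=
          lintegral_congr fun x => (hlim x).liminf_eq.symm
      _ ≤ liminf (fun k : ℕ => ∫⁻ x,
            ENNReal.ofReal (-Real.log (max (φ x) (1 / ((k : ℝ) + 1)))) ∂μ) atTop :=
          lintegral_liminf_le fun k =>
            ((continuous_logmax hφ (by positivity)).neg.measurable).ennreal_ofReal
      _ ≤ liminf (fun _ : ℕ => ENNReal.ofReal (a.toReal - c)) atTop :=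
          liminf_le_liminf (Eventually.of_forall hneg)
      _ = _ := by simp
  unfold eint
  rw [← ha, coe_ennreal_eq hafin]
  have hb : ∫⁻ x, EReal.posPart (-elog (φ x)) ∂μ ≠ ⊤ := (hfat.trans_lt ENNReal.ofReal_lt_top).ne
  rw [coe_ennreal_eq hb, ← EReal.coe_sub, EReal.coe_le_coe_iff]
  have := ENNReal.toReal_le_of_le_ofReal hac hfat
  linarith

lemma sub_prod {X : Type*} {T : X → X} {φ : ℕ → X → ℝ}
    (h0 : ∀ n x, 1 ≤ n → 0 ≤ φ n x)
    (hs : ∀ m n : ℕ, 1 ≤ m → 1 ≤ n → ∀ x, φ (n + m) x ≤ φ n x * φ m (T^[n] x))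
    {m : ℕ} (hm : 1 ≤ m) (ε : ℝ) (k : ℕ) (x : X) :
    φ ((k + 1) * m) x ≤ ∏ i ∈ Finset.range (k + 1), max (φ m (T^[i * m] x)) ε := by
  induction k with
  | zero => simp
  | succ k ih =>
    rw [Finset.prod_range_succ]
    have hk : 1 ≤ (k + 1) * m := Nat.one_le_iff_ne_zero.2 (by positivity)
    have e : (k + 1 + 1) * m = (k + 1) * m + m := by ring
    rw [e]
    refine (hs m ((k + 1) * m) hm hk x).trans ?_
    have h1 := h0 m (T^[(k + 1) * m] x) hm
    refine mul_le_mul ih (le_max_left _ _) h1 ((h0 _ x hk).trans ih)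

lemma log_prod_max {X : Type*} {T : X → X} {φ : X → ℝ} {ε : ℝ} (hε : 0 < ε) (a : ℕ → ℕ) (k : ℕ)
    (x : X) : Real.log (∏ i ∈ Finset.range k, max (φ (T^[a i] x)) ε) =
      ∑ i ∈ Finset.range k, Real.log (max (φ (T^[a i] x)) ε) :=
  Real.log_prod fun _ _ => (lt_max_of_lt_right hε).ne'

lemma integral_iterate {X : Type*} [MetricSpace X] [CompactSpace X]
    [MeasurableSpace X] [BorelSpace X] {T : X → X} (hT : Continuous T)
    (μ : Measure X) (hμ : Measure.map T μ = μ) {f : X → ℝ} (hf : Continuous f) (n : ℕ) :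
    ∫ x, f (T^[n] x) ∂μ = ∫ x, f x ∂μ := by
  have hmp : MeasurePreserving T μ μ := ⟨hT.measurable, hμ⟩
  have h2 := hmp.iterate n
  have := integral_map (μ := μ) (φ := T^[n]) h2.measurable.aemeasurable
    (f := f) (hf.aestronglyMeasurable)
  rw [h2.map_eq] at this
  exact this.symm

lemma chi_le {X : Type*} [MetricSpace X] [CompactSpace X]
    [MeasurableSpace X] [BorelSpace X] {T : X → X} (hT : Continuous T)
    {φ : ℕ → X → ℝ} (hφ : SubadditivePotential T φ)
    (μ : Measure X) [IsProbabilityMeasure μ] (hμ : Measure.map T μ = μ) (c : EReal)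
    (hc : Tendsto (fun n : ℕ => eint μ (fun x => elog (φ n x)) / (n : EReal)) atTop (𝓝 c))
    {m : ℕ} (hm : 1 ≤ m) {ε : ℝ} (hε : 0 < ε) :
    c ≤ (((∫ x, Real.log (max (φ m x) ε) ∂μ) / m : ℝ) : EReal) := by
  obtain ⟨hcont, h0, hs⟩ := hφ
  have hg := continuous_logmax (hcont m hm) hε
  have hsub : Tendsto (fun k : ℕ => (k + 1) * m) atTop atTop := by
    refine tendsto_atTop_mono (fun k => ?_) tendsto_id
    simp only [id]
    nlinarith
  refine le_of_tendsto (hc.comp hsub) (Eventually.of_forall fun k => ?_)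
  simp only [Function.comp]
  have hkm : (0 : ℝ) < (((k + 1) * m : ℕ) : ℝ) := by
    have : 0 < (k + 1) * m := by positivity
    exact_mod_cast this
  have hcont' : ∀ i, Continuous fun x => Real.log (max (φ m (T^[i * m] x)) ε) :=
    fun i => hg.comp (hT.iterate _)
  have key : eint μ (fun x => elog (φ ((k + 1) * m) x)) ≤
      ((((k + 1 : ℕ) : ℝ) * ∫ x, Real.log (max (φ m x) ε) ∂μ : ℝ) : EReal) := by
    have h1 := eint_le_integral μ (fun x => elog (φ ((k + 1) * m) x))
      (fun x => ∑ i ∈ Finset.range (k + 1), Real.log (max (φ m (T^[i * m] x)) ε))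
      (integrable_of_cont μ (continuous_finsetSum _ fun i _ => hcont' i)) (fun x => by
        rw [← log_prod_max hε (fun i => i * m)]
        exact elog_le_log (Finset.prod_pos fun i _ => lt_max_of_lt_right hε)
          (sub_prod h0 hs hm ε k x))
    refine h1.trans (le_of_eq ?_)
    rw [integral_finsetSum _ fun i _ => integrable_of_cont μ (hcont' i)]
    rw [Finset.sum_congr rfl fun i _ => integral_iterate hT μ hμ hg (i * m)]
    simp
  refine (EReal.div_le_div_right_of_nonneg (by positivity) key).trans (le_of_eq ?_)
  have e : (((k + 1) * m : ℕ) : EReal) = ((((k + 1) * m : ℕ) : ℝ) : EReal) := rfl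
  rw [e, ← EReal.coe_div]
  congr 1
  push_cast
  have : (m : ℝ) ≠ 0 := by positivity
  field_simp

lemma le_chi {X : Type*} [MetricSpace X] [CompactSpace X]
    [MeasurableSpace X] [BorelSpace X] {T : X → X}
    {φ : ℕ → X → ℝ} (hφ : SubadditivePotential T φ)
    (μ : Measure X) [IsProbabilityMeasure μ] (c : EReal)
    (hc : Tendsto (fun n : ℕ => eint μ (fun x => elog (φ n x)) / (n : EReal)) atTop (𝓝 c))
    (β : ℝ) (hβ : ∀ m : ℕ, 1 ≤ m → ∀ ε : ℝ, 0 < ε → m * β ≤ ∫ x, Real.log (max (φ m x) ε) ∂μ) :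
    (β : EReal) ≤ c := by
  refine ge_of_tendsto hc ?_
  filter_upwards [eventually_ge_atTop 1] with m hm
  have h1 := le_eint μ (hφ.1 m hm) (m * β) (hβ m hm)
  have hm0 : (m : ℝ) ≠ 0 := by positivity
  have e : (β : EReal) = ((m * β : ℝ) : EReal) / (m : EReal) := by
    have e : (m : EReal) = ((m : ℝ) : EReal) := rfl
    rw [e, ← EReal.coe_div]
    congr 1
    field_simp
  rw [e]
  exact EReal.div_le_div_right_of_nonneg (by positivity) h1

lemma sum_range_mul' (F : ℕ → ℝ) (k m : ℕ) :
    ∑ l ∈ Finset.range (k * m), F l =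
      ∑ j ∈ Finset.range m, ∑ i ∈ Finset.range k, F (i * m + j) := by
  rw [Finset.sum_comm]
  induction k with
  | zero => simp
  | succ k ih => rw [Nat.succ_mul, Finset.sum_range_add, ih, Finset.sum_range_succ]

/-- The key combinatorial estimate. -/
lemma comb_bound {X : Type*} [MetricSpace X] [CompactSpace X] [Nonempty X] {T : X → X}
    {φ : ℕ → X → ℝ} (hφ : SubadditivePotential T φ)
    {m : ℕ} (hm : 1 ≤ m) {ε : ℝ} (hε : 0 < ε) :
    ∃ C : ℝ, ∀ n x, 2 * m ≤ n → 0 < φ n x →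
      m * Real.log (φ n x) ≤ C + ∑ l ∈ Finset.range n, Real.log (max (φ m (T^[l] x)) ε) := by
  obtain ⟨hcont, h0, hs⟩ := hφ
  have hg := continuous_logmax (hcont m hm) hε
  have hbd : ∀ f : X → ℝ, Continuous f → ∃ B, ∀ x, |f x| ≤ B := by
    intro f hf
    obtain ⟨B, hB⟩ := isCompact_univ.exists_bound_of_continuousOn hf.continuousOn
    exact ⟨B, fun x => hB x (mem_univ x)⟩
  obtain ⟨D, hD⟩ := hbd _ hg
  have hD0 : 0 ≤ D := (abs_nonneg _).trans (hD (Classical.arbitrary X))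
  have hBex : ∀ i : ℕ, ∃ B, ∀ x, 1 ≤ i → φ i x ≤ B := by
    intro i
    by_cases hi : 1 ≤ i
    · obtain ⟨B, hB⟩ := hbd _ (hcont i hi)
      exact ⟨B, fun x _ => (le_abs_self _).trans (hB x)⟩
    · exact ⟨0, fun x h => absurd h hi⟩
  choose b hb using hBex
  set B : ℝ := 1 + ∑ i ∈ Finset.range (2 * m + 1), |b i| with hBdef
  have hB1 : 1 ≤ B := by
    have : 0 ≤ ∑ i ∈ Finset.range (2 * m + 1), |b i| := Finset.sum_nonneg fun _ _ => abs_nonneg _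
    linarith
  have hB : ∀ i, 1 ≤ i → i ≤ 2 * m → ∀ x, φ i x ≤ B := by
    intro i hi him x
    have h1 := hb i x hi
    have h2 : |b i| ≤ ∑ i ∈ Finset.range (2 * m + 1), |b i| :=
      Finset.single_le_sum (f := fun i => |b i|) (fun _ _ => abs_nonneg _)
        (Finset.mem_range.2 (by omega))
    linarith [le_abs_self (b i)]
  refine ⟨m * (2 * Real.log B) + 2 * m * D, fun n x hn hpos => ?_⟩
  obtain ⟨k, s, hsm, rfl⟩ : ∃ k s, s < m ∧ n = (k + 1) * m + (m + s) := by
    refine ⟨n / m - 2, n % m, Nat.mod_lt _ hm, ?_⟩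
    have h1 : 2 ≤ n / m := (Nat.le_div_iff_mul_le hm).2 hn
    obtain ⟨q, hq⟩ := Nat.exists_eq_add_of_le h1
    have h3 := Nat.div_add_mod n m
    rw [hq] at h3 ⊢
    have : 2 + q - 2 = q := by omega
    rw [this]
    nlinarith
  set F : ℕ → ℝ := fun l => Real.log (max (φ m (T^[l] x)) ε) with hF
  have hkm : 1 ≤ (k + 1) * m := Nat.one_le_iff_ne_zero.2 (by positivity)
  have hj : ∀ j ∈ Finset.range m, Real.log (φ ((k + 1) * m + (m + s)) x) ≤
      2 * Real.log B + ∑ i ∈ Finset.range (k + 1), F (i * m + j) := by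
    intro j hj
    have hjm := Finset.mem_range.1 hj
    set y := T^[j] x with hy
    have hprod : φ ((k + 1) * m) y ≤ ∏ i ∈ Finset.range (k + 1), max (φ m (T^[i * m] y)) ε :=
      sub_prod h0 hs hm ε k y
    have hPpos : 0 < ∏ i ∈ Finset.range (k + 1), max (φ m (T^[i * m] y)) ε :=
      Finset.prod_pos fun i _ => lt_max_of_lt_right hε
    have hstep : φ ((k + 1) * m + (m - j + s)) y ≤
        (∏ i ∈ Finset.range (k + 1), max (φ m (T^[i * m] y)) ε) * B := by
      refine (hs (m - j + s) ((k + 1) * m) (by omega) hkm y).trans ?_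
      exact mul_le_mul hprod (hB _ (by omega) (by omega) _) (h0 _ _ (by omega)) hPpos.le
    have htot : φ ((k + 1) * m + (m + s)) x ≤
        B * ((∏ i ∈ Finset.range (k + 1), max (φ m (T^[i * m] y)) ε) * B) := by
      rcases Nat.eq_zero_or_pos j with h | h
      · subst h
        have : φ ((k + 1) * m + (m + s)) x ≤
          (∏ i ∈ Finset.range (k + 1), max (φ m (T^[i * m] y)) ε) * B := by
          have hyx : y = x := rfl
          rw [hyx] at hstep ⊢
          simpa using hstep
        have h3 : 0 ≤ (∏ i ∈ Finset.range (k + 1), max (φ m (T^[i * m] y)) ε) * B := by positivity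
        nlinarith
      · have e : (k + 1) * m + (m + s) = j + ((k + 1) * m + (m - j + s)) := by omega
        rw [e]
        refine (hs ((k + 1) * m + (m - j + s)) j (by omega) h x).trans ?_
        exact mul_le_mul (hB j h (by omega) x) hstep (h0 _ _ (by omega)) (by linarith)
    have hl := Real.log_le_log hpos htot
    have hBne : B ≠ 0 := by positivity
    rw [Real.log_mul hBne (by positivity), Real.log_mul hPpos.ne' hBne,
      log_prod_max hε (fun i => i * m)] at hl
    have e2 : ∑ i ∈ Finset.range (k + 1), Real.log (max (φ m (T^[i * m] y)) ε) =
        ∑ i ∈ Finset.range (k + 1), F (i * m + j) := by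
      refine Finset.sum_congr rfl fun i _ => ?_
      simp only [hF, hy, Function.iterate_add_apply]
    rw [e2] at hl
    linarith
  have hsum := Finset.sum_le_sum hj
  rw [Finset.sum_const, Finset.card_range, nsmul_eq_mul, Finset.sum_add_distrib, Finset.sum_const,
    Finset.card_range, nsmul_eq_mul, ← sum_range_mul'] at hsum
  rw [Finset.sum_range_add]
  have hrest : -(2 * m * D) ≤ ∑ l ∈ Finset.range (m + s), F ((k + 1) * m + l) := by
    have h1 : ∑ l ∈ Finset.range (m + s), (-D) ≤
        ∑ l ∈ Finset.range (m + s), F ((k + 1) * m + l) :=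
      Finset.sum_le_sum fun l _ => (abs_le.1 (hD _)).1
    rw [Finset.sum_const, Finset.card_range, nsmul_eq_mul] at h1
    have h2 : ((m + s : ℕ) : ℝ) ≤ 2 * m := by
      have : m + s ≤ 2 * m := by omega
      exact_mod_cast this
    nlinarith
  linarith

/-- Empirical measure of length `n + 1` along the orbit of `x`. -/
noncomputable def empMeasure {X : Type*} [MeasurableSpace X] (T : X → X) (n : ℕ) (x : X) :
    Measure X :=
  ((n + 1 : ℕ) : ℝ≥0∞)⁻¹ • ∑ l ∈ Finset.range (n + 1), Measure.dirac (T^[l] x)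

lemma empMeasure_prob {X : Type*} [MeasurableSpace X] (T : X → X) (n : ℕ) (x : X) :
    IsProbabilityMeasure (empMeasure T n x) := by
  constructor
  unfold empMeasure
  rw [Measure.smul_apply, Measure.finsetSum_apply]
  simp only [measure_univ, Finset.sum_const, Finset.card_range, nsmul_eq_mul, mul_one, smul_eq_mul]
  exact ENNReal.inv_mul_cancel (by simp) (by simp)

lemma empMeasure_integral {X : Type*} [MetricSpace X] [CompactSpace X]
    [MeasurableSpace X] [BorelSpace X] (T : X → X) (n : ℕ) (x : X) {f : X → ℝ}
    (hf : Continuous f) : ∫ y, f y ∂(empMeasure T n x) =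
      (∑ l ∈ Finset.range (n + 1), f (T^[l] x)) / ((n + 1 : ℕ) : ℝ) := by
  unfold empMeasure
  rw [integral_smul_measure, integral_finsetSum_measure fun i _ => integrable_of_cont _ hf]
  simp only [integral_dirac]
  rw [ENNReal.toReal_inv, ENNReal.toReal_natCast, smul_eq_mul, div_eq_inv_mul]

lemma integral_tendsto {X : Type*} [MetricSpace X] [CompactSpace X]
    [MeasurableSpace X] [BorelSpace X] {ι : Type*} {L : Filter ι} {μs : ι → ProbabilityMeasure X}
    {μ : ProbabilityMeasure X} (h : Tendsto μs L (𝓝 μ)) {f : X → ℝ} (hf : Continuous f) :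
    Tendsto (fun i => ∫ x, f x ∂(μs i : Measure X)) L (𝓝 (∫ x, f x ∂(μ : Measure X))) :=
  ProbabilityMeasure.tendsto_iff_forall_integral_tendsto.1 h
    (BoundedContinuousFunction.mkOfCompact ⟨f, hf⟩)

lemma map_eq_of_integral {X : Type*} [MetricSpace X] [CompactSpace X]
    [MeasurableSpace X] [BorelSpace X] {T : X → X} (hT : Continuous T)
    (μ : Measure X) [IsProbabilityMeasure μ]
    (h : ∀ f : X → ℝ, Continuous f → ∫ x, f (T x) ∂μ = ∫ x, f x ∂μ) : Measure.map T μ = μ := by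
  have : IsProbabilityMeasure (Measure.map T μ) :=
    Measure.isProbabilityMeasure_map hT.measurable.aemeasurable
  refine ext_of_forall_integral_eq_of_IsFiniteMeasure fun f => ?_
  rw [integral_map hT.measurable.aemeasurable f.continuous.aestronglyMeasurable]
  exact h f f.continuous

lemma invariant_of_tendsto {X : Type*} [MetricSpace X] [CompactSpace X]
    [MeasurableSpace X] [BorelSpace X] {T : X → X} (hT : Continuous T) {ι : Type*} {L : Filter ι}
    [L.NeBot] {μs : ι → ProbabilityMeasure X} {μ : ProbabilityMeasure X}
    (h : Tendsto μs L (𝓝 μ))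
    (hinv : ∀ f : X → ℝ, Continuous f →
      Tendsto (fun i => ∫ x, f (T x) ∂(μs i : Measure X) - ∫ x, f x ∂(μs i : Measure X)) L (𝓝 0)) :
    Measure.map T (μ : Measure X) = (μ : Measure X) := by
  refine map_eq_of_integral hT _ fun f hf => ?_
  have h1 := (integral_tendsto h (hf.comp hT)).sub (integral_tendsto h hf)
  exact sub_eq_zero.1 (tendsto_nhds_unique h1 (hinv f hf))

lemma sup_facts {X : Type*} {φ : ℕ → X → ℝ} (β : ℝ)
    (hβ : Tendsto (fun n : ℕ => elog (⨆ x, φ n x) / (n : EReal)) atTop (𝓝 (β : EReal))) :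
    (∀ᶠ n : ℕ in atTop, 0 < ⨆ x, φ n x) ∧
    Tendsto (fun n : ℕ => Real.log (⨆ x, φ n x) / n) atTop (𝓝 β) := by
  have h1 : ∀ᶠ n : ℕ in atTop, 0 < ⨆ x, φ n x := by
    filter_upwards [hβ.eventually_const_lt (EReal.bot_lt_coe β), eventually_ge_atTop 1]
      with n hn hn1
    by_contra hcon
    rw [elog_of_nonpos (not_lt.1 hcon),
      EReal.bot_div_of_pos_ne_top (by exact_mod_cast hn1) (EReal.natCast_ne_top n)] at hn
    exact lt_irrefl _ hn
  refine ⟨h1, EReal.tendsto_coe.1 (hβ.congr' ?_)⟩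
  filter_upwards [h1] with n hn
  rw [elog_of_pos hn]
  exact (EReal.coe_div _ _).symm

lemma chi_le_beta {X : Type*} [MetricSpace X] [CompactSpace X]
    [MeasurableSpace X] [BorelSpace X] {T : X → X}
    {φ : ℕ → X → ℝ} (hφ : SubadditivePotential T φ)
    (μ : Measure X) [IsProbabilityMeasure μ] (c : EReal)
    (hc : Tendsto (fun n : ℕ => eint μ (fun x => elog (φ n x)) / (n : EReal)) atTop (𝓝 c))
    (β : ℝ)
    (hβ : Tendsto (fun n : ℕ => elog (⨆ x, φ n x) / (n : EReal)) atTop (𝓝 (β : EReal))) :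
    c ≤ β := by
  refine le_of_tendsto_of_tendsto hc hβ ?_
  filter_upwards [(sup_facts β hβ).1, eventually_ge_atTop 1] with n hn hn1
  refine EReal.div_le_div_right_of_nonneg (by positivity) ?_
  have hbdd : BddAbove (range (φ n)) := (isCompact_range (hφ.1 n hn1)).bddAbove
  have := eint_le_integral μ (fun x => elog (φ n x)) (fun _ => Real.log (⨆ x, φ n x))
    (integrable_const _) (fun x => elog_le_log hn (le_ciSup hbdd x))
  rw [elog_of_pos hn]
  simpa using this

lemma exists_maximizing {X : Type*} [MetricSpace X] [CompactSpace X] [Nonempty X]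
    [MeasurableSpace X] [BorelSpace X] {T : X → X} (hT : Continuous T)
    {φ : ℕ → X → ℝ} (hφ : SubadditivePotential T φ) (β : ℝ)
    (hβ : Tendsto (fun n : ℕ => elog (⨆ x, φ n x) / (n : EReal)) atTop (𝓝 (β : EReal))) :
    ∃ ν : ProbabilityMeasure X, Measure.map T (ν : Measure X) = (ν : Measure X) ∧
      ∀ m : ℕ, 1 ≤ m → ∀ ε : ℝ, 0 < ε →
        m * β ≤ ∫ x, Real.log (max (φ m x) ε) ∂(ν : Measure X) := by
  have hmax : ∀ n : ℕ, ∃ x, φ (n + 1) x = ⨆ y, φ (n + 1) y := by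
    intro n
    obtain ⟨x, -, hx⟩ := isCompact_univ.exists_isMaxOn univ_nonempty
      (hφ.1 (n + 1) (by omega)).continuousOn
    exact ⟨x, le_antisymm (le_ciSup (isCompact_range (hφ.1 (n + 1) (by omega))).bddAbove x)
      (ciSup_le fun y => hx (mem_univ y))⟩
  choose x hx using hmax
  let ν : ℕ → ProbabilityMeasure X := fun n => ⟨empMeasure T n (x n), empMeasure_prob T n (x n)⟩
  have hνint : ∀ n {f : X → ℝ}, Continuous f → ∫ y, f y ∂(ν n : Measure X) =
      (∑ l ∈ Finset.range (n + 1), f (T^[l] (x n))) / ((n + 1 : ℕ) : ℝ) :=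
    fun n f hf => empMeasure_integral T n (x n) hf
  let U : Ultrafilter ℕ := Ultrafilter.of atTop
  have hU : (U : Filter ℕ) ≤ atTop := Ultrafilter.of_le atTop
  obtain ⟨ν0, -, hν0⟩ := isCompact_univ.ultrafilter_le_nhds (U.map ν) (by simp)
  have hlim : Tendsto ν U (𝓝 ν0) := hν0
  have hN : Tendsto (fun n : ℕ => ((n + 1 : ℕ) : ℝ)) atTop atTop :=
    tendsto_natCast_atTop_atTop.comp (tendsto_add_atTop_nat 1)
  refine ⟨ν0, invariant_of_tendsto hT hlim fun f hf => ?_, fun m hm ε hε => ?_⟩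
  · refine Tendsto.mono_left ?_ hU
    obtain ⟨B, hB⟩ := isCompact_univ.exists_bound_of_continuousOn hf.continuousOn
    have hB' : ∀ y, |f y| ≤ B := fun y => hB y (mem_univ y)
    refine squeeze_zero_norm (a := fun n : ℕ => (2 * B) / ((n + 1 : ℕ) : ℝ)) (fun n => ?_)
      (tendsto_const_nhds.div_atTop hN)
    rw [hνint n (f := fun y => f (T y)) (hf.comp hT), hνint n hf, ← sub_div,
      ← Finset.sum_sub_distrib]
    have e : ∑ l ∈ Finset.range (n + 1), (f (T (T^[l] (x n))) - f (T^[l] (x n))) =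
        f (T^[n + 1] (x n)) - f (T^[0] (x n)) := by
      rw [← Finset.sum_range_sub (fun l => f (T^[l] (x n)))]
      refine Finset.sum_congr rfl fun l _ => ?_
      rw [Function.iterate_succ_apply']
    rw [e, norm_div, Real.norm_natCast]
    refine div_le_div_of_nonneg_right ?_ (by positivity)
    rw [Real.norm_eq_abs]
    refine (abs_sub _ _).trans ?_
    linarith [hB' (T^[n + 1] (x n)), hB' (T^[0] (x n))]
  · obtain ⟨C, hC⟩ := comb_bound (T := T) hφ hm hε
    obtain ⟨hpos, hlog⟩ := sup_facts β hβ
    have hg := continuous_logmax (hφ.1 m hm) hε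
    have h1 : Tendsto (fun n : ℕ => C / ((n + 1 : ℕ) : ℝ) +
        ∫ y, Real.log (max (φ m y) ε) ∂(ν n : Measure X)) U
        (𝓝 (0 + ∫ y, Real.log (max (φ m y) ε) ∂(ν0 : Measure X))) :=
      ((tendsto_const_nhds.div_atTop hN).mono_left hU).add (integral_tendsto hlim hg)
    rw [zero_add] at h1
    have h2 : Tendsto (fun n : ℕ => (m : ℝ) * (Real.log (⨆ y, φ (n + 1) y) / ((n + 1 : ℕ) : ℝ))) U
        (𝓝 (m * β)) :=
      ((hlog.comp (tendsto_add_atTop_nat 1)).const_mul (m : ℝ)).mono_left hU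
    refine le_of_tendsto_of_tendsto h2 h1 (hU ?_)
    filter_upwards [(tendsto_add_atTop_nat 1).eventually hpos, eventually_ge_atTop (2 * m)]
      with n hn hnm
    have h3 := hC (n + 1) (x n) (by omega) (by rw [hx]; exact hn)
    rw [hx] at h3
    rw [hνint n hg, ← add_div, ← mul_div_assoc]
    exact div_le_div_of_nonneg_right h3 (by positivity)
/-- for a weak-* accumulation point μ of equilibrium states (μ_t),
h_μ(T) = lim_{t→∞} h_{μ_t}(T) = max{h_ν(T) : ν ∈ M_max(Φ)}. -/
theorem entropy_of_accumulation_point_eq_max_entropy_of_maximizing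
    {X : Type*} [MetricSpace X] [CompactSpace X] [Nonempty X]
    [MeasurableSpace X] [BorelSpace X]
    (T : X → X) (hT : Continuous T)
    (φ : ℕ → X → ℝ) (hφ : SubadditivePotential T φ)
    -- metric entropies: nonnegative, bounded (finite topological entropy), and
    -- upper semi-continuous on the set of invariant measures
    (h : ProbabilityMeasure X → ℝ) (hh0 : ∀ μ, 0 ≤ h μ)
    (htop : ∃ H : ℝ, ∀ μ : ProbabilityMeasure X,
      Measure.map T (μ : Measure X) = (μ : Measure X) → h μ ≤ H)
    (husc : UpperSemicontinuousOn h
      {μ : ProbabilityMeasure X | Measure.map T (μ : Measure X) = (μ : Measure X)})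
    -- Lyapunov exponents of invariant measures
    (χ : ProbabilityMeasure X → EReal)
    (hχ : ∀ μ : ProbabilityMeasure X, Measure.map T (μ : Measure X) = (μ : Measure X) →
      Tendsto (fun n : ℕ => eint (μ : Measure X) (fun x => elog (φ n x)) / (n : EReal))
        atTop (𝓝 (χ μ)))
    -- β(Φ) > -∞ (and β(Φ) < ∞ always holds), so β(Φ) is a real number
    (β : ℝ)
    (hβ : Tendsto (fun n : ℕ => elog (⨆ x, φ n x) / (n : EReal)) atTop (𝓝 (β : EReal)))
    -- the topological pressure, via the variational principle, and equilibrium states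
    (P : ℝ → ℝ)
    (hP : ∀ t ∈ Set.Ioi (0 : ℝ), (P t : EReal) =
      sSup ((fun ν => (h ν : EReal) + (t : EReal) * χ ν) ''
        {ν : ProbabilityMeasure X | Measure.map T (ν : Measure X) = (ν : Measure X)}))
    (μt : ℝ → ProbabilityMeasure X)
    (hEq : ∀ t ∈ Set.Ioi (0 : ℝ),
      Measure.map T (μt t : Measure X) = (μt t : Measure X) ∧
      (h (μt t) : EReal) + (t : EReal) * χ (μt t) = (P t : EReal))
    -- μ_inf is a weak-* accumulation point of (μ_t) as t → ∞
    (μ_inf : ProbabilityMeasure X) (hacc : MapClusterPt μ_inf atTop μt) :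
    Tendsto (fun t => h (μt t)) atTop (𝓝 (h μ_inf)) ∧
    IsGreatest
      {r : ℝ | ∃ ν : ProbabilityMeasure X,
        Measure.map T (ν : Measure X) = (ν : Measure X) ∧ χ ν = (β : EReal) ∧ r = h ν}
      (h μ_inf) := by
  obtain ⟨H, hH⟩ := htop
  obtain ⟨ν0, hν0, hν0β⟩ := exists_maximizing hT hφ β hβ
  have hle : ∀ ν : ProbabilityMeasure X, Measure.map T (ν : Measure X) = (ν : Measure X) →
      χ ν ≤ β := fun ν hν => chi_le_beta hφ ν (χ ν) (hχ ν hν) β hβ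
  have hν0χ : χ ν0 = β := le_antisymm (hle ν0 hν0) (le_chi hφ ν0 _ (hχ ν0 hν0) β hν0β)
  -- real-valued exponents of the equilibrium states
  have hreal : ∀ t : ℝ, 0 < t → ∃ c : ℝ, χ (μt t) = c := by
    intro t ht
    have h1 := (hEq t ht).2
    generalize χ (μt t) = c at h1
    induction c with
    | bot => rw [EReal.coe_mul_bot_of_pos ht, EReal.add_bot] at h1; exact absurd h1.symm (EReal.coe_ne_bot _)
    | top => rw [EReal.coe_mul_top_of_pos ht, EReal.coe_add_top] at h1; exact absurd h1.symm (EReal.coe_ne_top _)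
    | coe c => exact ⟨c, rfl⟩
  choose! c hc using hreal
  have hcβ : ∀ t, 0 < t → c t ≤ β := by
    intro t ht
    have := hle _ (hEq t ht).1
    rw [hc t ht] at this
    exact_mod_cast this
  have hPt : ∀ t, 0 < t → P t = h (μt t) + t * c t := by
    intro t ht
    have h1 := (hEq t ht).2
    rw [hc t ht] at h1
    exact_mod_cast h1.symm
  have hcmp : ∀ t, 0 < t → ∀ ν : ProbabilityMeasure X,
      Measure.map T (ν : Measure X) = (ν : Measure X) → ∀ d : ℝ, χ ν = d →
      h ν + t * d ≤ h (μt t) + t * c t := by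
    intro t ht ν hν d hd
    have h1 : (h ν : EReal) + (t : EReal) * χ ν ≤ P t := by
      rw [hP t ht]
      exact le_sSup ⟨ν, hν, rfl⟩
    rw [hd, hPt t ht] at h1
    exact_mod_cast h1
  -- entropies dominate those of maximizing measures
  have hdom : ∀ t, 0 < t → ∀ ν : ProbabilityMeasure X,
      Measure.map T (ν : Measure X) = (ν : Measure X) → χ ν = β → h ν ≤ h (μt t) := by
    intro t ht ν hν hd
    have h1 := hcmp t ht ν hν β hd
    nlinarith [hcβ t ht]
  have hanti : ∀ s t, 0 < s → s ≤ t → h (μt t) ≤ h (μt s) := by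
    intro s t hs hst
    rcases hst.eq_or_lt with rfl | hst
    · exact le_rfl
    have ht := hs.trans hst
    have h1 := hcmp s hs (μt t) (hEq t ht).1 _ (hc t ht)
    have h2 := hcmp t ht (μt s) (hEq s hs).1 _ (hc s hs)
    have h3 : c s ≤ c t := by
      by_contra hcon
      nlinarith [not_le.1 hcon]
    nlinarith
  have hclim : Tendsto c atTop (𝓝 β) := by
    have hz : Tendsto (fun t : ℝ => β - H / t) atTop (𝓝 (β - 0)) :=
      tendsto_const_nhds.sub (tendsto_const_nhds.div_atTop tendsto_id)
    rw [sub_zero] at hz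
    refine tendsto_of_tendsto_of_tendsto_of_le_of_le' hz tendsto_const_nhds ?_ ?_
    · filter_upwards [eventually_gt_atTop 0] with t ht
      have h1 := hcmp t ht ν0 hν0 β hν0χ
      have h2 := hH _ (hEq t ht).1
      have h3 := hh0 ν0
      have h4 : β - c t ≤ H / t := by
        rw [le_div_iff₀ ht]
        nlinarith
      linarith
    · filter_upwards [eventually_gt_atTop 0] with t ht using hcβ t ht
  obtain ⟨U, hU, hUlim⟩ := mapClusterPt_iff_ultrafilter.1 hacc
  have hpos : ∀ᶠ t in (U : Filter ℝ), 0 < t := hU (eventually_gt_atTop (0 : ℝ))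
  have hinv : Measure.map T (μ_inf : Measure X) = (μ_inf : Measure X) := by
    refine invariant_of_tendsto hT hUlim fun f hf => ?_
    refine tendsto_const_nhds.congr' ?_
    filter_upwards [hpos] with t ht
    have := integral_iterate hT _ (hEq t ht).1 hf 1
    simp only [Function.iterate_one] at this
    rw [this, sub_self]
  have hχinf : χ μ_inf = β := by
    refine le_antisymm (hle _ hinv) (le_chi hφ μ_inf _ (hχ _ hinv) β fun m hm ε hε => ?_)
    have hg := continuous_logmax (hφ.1 m hm) hε
    refine le_of_tendsto_of_tendsto ((hclim.const_mul (m : ℝ)).mono_left hU)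
      (integral_tendsto hUlim hg) ?_
    filter_upwards [hpos] with t ht
    have h1 := chi_le hT hφ (μt t : Measure X) (hEq t ht).1 _ (hχ _ (hEq t ht).1) hm hε
    rw [hc t ht, EReal.coe_le_coe_iff, le_div_iff₀ (by positivity)] at h1
    linarith
  refine ⟨?_, ⟨μ_inf, hinv, hχinf, rfl⟩, ?_⟩
  · rw [tendsto_order]
    refine ⟨fun a ha => ?_, fun a ha => ?_⟩
    · filter_upwards [eventually_gt_atTop 0] with t ht
      exact ha.trans_le (hdom t ht _ hinv hχinf)
    · have h1 := husc μ_inf hinv a ha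
      have h2 : Tendsto μt U (𝓝[{μ : ProbabilityMeasure X |
          Measure.map T (μ : Measure X) = (μ : Measure X)}] μ_inf) := by
        refine tendsto_nhdsWithin_iff.2 ⟨hUlim, ?_⟩
        filter_upwards [hpos] with t ht using (hEq t ht).1
      obtain ⟨s, hs, hs0⟩ := ((h2.eventually h1).and hpos).exists
      filter_upwards [eventually_ge_atTop s] with t ht
      exact (hanti s t hs0 ht).trans_lt hs
  · rintro r ⟨ν, hν, hνβ, rfl⟩
    have h2 : ∀ t, 0 < t → h ν ≤ h (μt t) := fun t ht => hdom t ht ν hν hνβ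
    by_contra hcon
    have h1 := husc μ_inf hinv (h ν) (not_le.1 hcon)
    have h3 : Tendsto μt U (𝓝[{μ : ProbabilityMeasure X |
        Measure.map T (μ : Measure X) = (μ : Measure X)}] μ_inf) := by
      refine tendsto_nhdsWithin_iff.2 ⟨hUlim, ?_⟩
      filter_upwards [hpos] with t ht using (hEq t ht).1
    obtain ⟨s, hs, hs0⟩ := ((h3.eventually h1).and hpos).exists
    exact absurd (h2 s hs0) (not_le.2 hs)
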